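/- arXiv:1906.06970 — 2 statements merged into one kernel-verified Lean document; each statement's English description precedes it below -/
import Mathlib

section
/- Let X, U, W be finite sets and let p_{XUW} be a pmf on X×U×W with marginal/conditional decomposition determined by p_U, p_{X|UW}. If H(U) > I(X; U,W), then there exists a sequence of maps a_n : U^n → W^n such that, defining for each n the pmf p_{X^n}(x^n) = Σ_{u^n ∈ U^n} ( ∏_{i=1}^n p_U(u_i) ) · ( ∏_{i=1}^n p_{X|UW}(x_i | u_i, (a_n(u^n))_i ) ), one has lim_{n→∞} D( p_{X^n} ‖ p_X^{⊗n} ) = 0, where p_X is the X-marginal of p_{XUW}. -/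
open Finset

/-- A probability mass function on a finite alphabet. -/
def IsPMF {α : Type*} [Fintype α] (p : α → ℝ) : Prop :=
  (∀ a, 0 ≤ p a) ∧ ∑ a, p a = 1

/-- KL divergence in bits (finite-alphabet sum form, convention `0 · log 0 = 0`). -/
noncomputable def klDiv {α : Type*} [Fintype α] (p q : α → ℝ) : ℝ :=
  ∑ a, p a * Real.logb 2 (p a / q a)

/-- Shannon entropy in bits. -/
noncomputable def ent {α : Type*} [Fintype α] (p : α → ℝ) : ℝ :=
  -∑ a, p a * Real.logb 2 (p a)

section helpers

theorem sc_sum_pi {A B : Type*} [Fintype A] [DecidableEq A] [Fintype B] (F : A → B → ℝ) :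
    ∑ f : A → B, ∏ a, F a (f a) = ∏ a, ∑ b, F a b := by
  rw [Finset.prod_univ_sum, Fintype.piFinset_univ]

theorem sc_E2 {A B : Type*} [Fintype A] [DecidableEq A] [Fintype B] (κ : A → B → ℝ)
    (hκ : ∀ a, ∑ b, κ a b = 1) (a a' : A) (hne : a' ≠ a) (h g : B → ℝ) :
    ∑ f : A → B, (∏ x, κ x (f x)) * (h (f a) * g (f a')) =
      (∑ b, κ a b * h b) * (∑ b, κ a' b * g b) := by
  have h1 : ∀ f : A → B, (∏ x, κ x (f x)) * (h (f a) * g (f a')) =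
      ∏ x, (κ x (f x) * ((if x = a then h (f x) else 1) * (if x = a' then g (f x) else 1))) := by
    intro f
    rw [Finset.prod_mul_distrib, Finset.prod_mul_distrib]
    simp
  simp_rw [h1]
  rw [sc_sum_pi (fun x b => κ x b * ((if x = a then h b else 1) * (if x = a' then g b else 1)))]
  have h2 : ∀ x, ∑ b, κ x b * ((if x = a then h b else 1) * (if x = a' then g b else 1)) =
      (if x = a then ∑ b, κ a b * h b else 1) * (if x = a' then ∑ b, κ a' b * g b else 1) := by
    intro x
    by_cases hx : x = a
    · subst hx
      simp [hne.symm]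
    · by_cases hx' : x = a'
      · subst hx'
        simp [hx]
      · simp [hx, hx', hκ]
  simp_rw [h2, Finset.prod_mul_distrib]
  simp

theorem sc_E1 {A B : Type*} [Fintype A] [DecidableEq A] [Fintype B] (κ : A → B → ℝ)
    (hκ : ∀ a, ∑ b, κ a b = 1) (a : A) (h : B → ℝ) :
    ∑ f : A → B, (∏ x, κ x (f x)) * h (f a) = ∑ b, κ a b * h b := by
  have h1 : ∀ f : A → B, (∏ x, κ x (f x)) * h (f a) =
      ∏ x, (κ x (f x) * (if x = a then h (f x) else 1)) := by
    intro f
    rw [Finset.prod_mul_distrib]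
    simp
  simp_rw [h1]
  rw [sc_sum_pi (fun x b => κ x b * (if x = a then h b else 1))]
  have h2 : ∀ x, ∑ b, κ x b * (if x = a then h b else 1) =
      (if x = a then ∑ b, κ a b * h b else 1) := by
    intro x
    by_cases hx : x = a
    · subst hx
      simp
    · simp [hx, hκ]
  simp_rw [h2]
  simp

/-- `log (1+z) ≤ z^s / s`. -/
theorem sc_log_bound (z s : ℝ) (hz : 0 ≤ z) (hs : 0 < s) (hs1 : s ≤ 1) :
    Real.log (1 + z) ≤ z ^ s / s := by
  rw [le_div_iff₀ hs, mul_comm, ← Real.log_rpow (by linarith)]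
  have h1 : (1 + z) ^ s ≤ 1 + z ^ s := by
    have := Real.rpow_add_le_add_rpow (p := s) (show (0:ℝ) ≤ 1 by norm_num) hz hs.le hs1
    simpa using this
  have h2 : 0 < (1 + z) ^ s := Real.rpow_pos_of_pos (by linarith) _
  have := Real.log_le_sub_one_of_pos h2
  linarith

theorem sc_oneshot {A B C : Type*} [Fintype A] [Fintype B] [Fintype C]
    (μ : A → ℝ) (hμ : ∀ a, 0 ≤ μ a)
    (κ : A → B → ℝ) (hκ0 : ∀ a b, 0 ≤ κ a b) (hκ : ∀ a, ∑ b, κ a b = 1)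
    (V : A → B → C → ℝ) (hV : ∀ a b c, 0 ≤ V a b c)
    (q : C → ℝ) (hq : ∀ c, q c = ∑ a, ∑ b, μ a * κ a b * V a b c) :
    ∃ f : A → B, (∀ a, 0 < κ a (f a)) ∧
      ∑ c, (∑ a, μ a * V a (f a) c) * Real.log ((∑ a, μ a * V a (f a) c) / q c) ≤
      ∑ a, ∑ b, ∑ c, μ a * κ a b * V a b c * Real.log (1 + μ a * V a b c / q c) := by
  classical
  set R := ∑ a, ∑ b, ∑ c, μ a * κ a b * V a b c * Real.log (1 + μ a * V a b c / q c) with hR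
  set p : (A → B) → C → ℝ := fun f c => ∑ a, μ a * V a (f a) c with hp
  set M : (A → B) → ℝ := fun f => ∏ a, κ a (f a) with hM
  have hM0 : ∀ f, 0 ≤ M f := fun f => Finset.prod_nonneg fun a _ => hκ0 a _
  have hM1 : ∑ f, M f = 1 := by
    rw [hM, sc_sum_pi κ]; simp [hκ]
  have hq0 : ∀ c, 0 ≤ q c := fun c => by
    rw [hq]
    exact Finset.sum_nonneg fun a _ => Finset.sum_nonneg fun b _ =>
      mul_nonneg (mul_nonneg (hμ a) (hκ0 a b)) (hV a b c)
  have hp0 : ∀ f c, 0 ≤ p f c := fun f c =>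
    Finset.sum_nonneg fun a _ => mul_nonneg (hμ a) (hV _ _ _)
  set h : A → C → B → ℝ := fun a c b => μ a * V a b c / (μ a * V a b c + q c) with hh
  have hh0 : ∀ a c b, 0 ≤ h a c b := fun a c b =>
    div_nonneg (mul_nonneg (hμ a) (hV _ _ _))
      (add_nonneg (mul_nonneg (hμ a) (hV _ _ _)) (hq0 c))
  have hpt : ∀ f a c, M f * (μ a * V a (f a) c * Real.log (p f c / q c)) ≤
      M f * (μ a * V a (f a) c * Real.log (1 + μ a * V a (f a) c / q c)) +
      (∑ a' ∈ univ.erase a, M f * (h a c (f a) * (μ a' * V a' (f a') c)) -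
        M f * h a c (f a) * q c) := by
    intro f a c
    rcases (hM0 f).eq_or_lt with h0 | hMp
    · simp [← h0]
    rcases (mul_nonneg (hμ a) (hV a (f a) c)).eq_or_lt with h0 | hvp
    · have : h a c (f a) = 0 := by simp [hh, ← h0]
      simp [← h0, this]
    have hqp : 0 < q c := by
      have hκp : 0 < κ a (f a) := by
        refine lt_of_le_of_ne (hκ0 _ _) fun h0 => ?_
        have : M f = 0 := Finset.prod_eq_zero (mem_univ a) h0.symm
        linarith
      have t : μ a * κ a (f a) * V a (f a) c ≤ q c := by
        rw [hq]
        have i1 : μ a * κ a (f a) * V a (f a) c ≤ ∑ b, μ a * κ a b * V a b c :=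
          Finset.single_le_sum (f := fun b => μ a * κ a b * V a b c)
            (fun b _ => mul_nonneg (mul_nonneg (hμ a) (hκ0 a b)) (hV a b c)) (mem_univ (f a))
        refine i1.trans (Finset.single_le_sum (f := fun a => ∑ b, μ a * κ a b * V a b c)
          (fun a _ => Finset.sum_nonneg fun b _ =>
            mul_nonneg (mul_nonneg (hμ a) (hκ0 a b)) (hV a b c)) (mem_univ a))
      have : 0 < μ a * κ a (f a) * V a (f a) c := by
        have := mul_pos hvp hκp
        linarith [mul_right_comm (μ a) (V a (f a) c) (κ a (f a))]
      linarith
    have hsplit : p f c = μ a * V a (f a) c + ∑ a' ∈ univ.erase a, μ a' * V a' (f a') c :=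
      (Finset.add_sum_erase univ (fun a => μ a * V a (f a) c) (mem_univ a)).symm
    have hS : 0 ≤ ∑ a' ∈ univ.erase a, μ a' * V a' (f a') c :=
      Finset.sum_nonneg fun a _ => mul_nonneg (hμ a) (hV _ _ _)
    rw [← Finset.mul_sum, ← Finset.mul_sum]
    set S := ∑ a' ∈ univ.erase a, μ a' * V a' (f a') c
    simp only [hh]
    rw [hsplit]
    set v := μ a * V a (f a) c
    have key : Real.log ((v + S) / q c) ≤ Real.log (1 + v / q c) + (S - q c) / (v + q c) := by
      have e : 1 + v / q c = (v + q c) / q c := by field_simp; ring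
      rw [e, Real.log_div (by positivity) hqp.ne', Real.log_div (by positivity) hqp.ne']
      have := Real.log_le_sub_one_of_pos (show 0 < (v + S) / (v + q c) by positivity)
      rw [Real.log_div (by positivity) (by positivity)] at this
      have e2 : (v + S) / (v + q c) - 1 = (S - q c) / (v + q c) := by field_simp; ring
      linarith
    have := mul_le_mul_of_nonneg_left key (mul_pos hMp hvp).le
    calc _ = M f * v * Real.log ((v + S) / q c) := by ring
      _ ≤ _ := this
      _ = _ := by ring
  have hneg : ∀ a c, ∑ f, (∑ a' ∈ univ.erase a, M f * (h a c (f a) * (μ a' * V a' (f a') c)) -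
        M f * h a c (f a) * q c) ≤ 0 := by
    intro a c
    rw [Finset.sum_sub_distrib, Finset.sum_comm]
    have e1 : ∀ a' ∈ univ.erase a, ∑ f, M f * (h a c (f a) * (μ a' * V a' (f a') c)) =
        (∑ b, κ a b * h a c b) * ∑ b, κ a' b * (μ a' * V a' b c) := fun a' ha' =>
      sc_E2 κ hκ a a' (Finset.ne_of_mem_erase ha') (h a c) (fun b => μ a' * V a' b c)
    rw [Finset.sum_congr rfl e1, ← Finset.mul_sum, ← Finset.sum_mul,
      sc_E1 κ hκ a (h a c), ← mul_sub]
    refine mul_nonpos_of_nonneg_of_nonpos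
      (Finset.sum_nonneg fun b _ => mul_nonneg (hκ0 _ _) (hh0 _ _ _)) ?_
    rw [sub_nonpos, hq]
    refine (Finset.sum_le_sum_of_subset_of_nonneg (Finset.subset_univ _) ?_).trans ?_
    · intro i _ _
      exact Finset.sum_nonneg fun b _ => mul_nonneg (hκ0 _ _) (mul_nonneg (hμ _) (hV _ _ _))
    · refine le_of_eq (Finset.sum_congr rfl fun a _ => Finset.sum_congr rfl fun b _ => by ring)
  have havg : ∑ f, M f * ∑ c, p f c * Real.log (p f c / q c) ≤ R := by
    calc _ = ∑ a, ∑ c, ∑ f, M f * (μ a * V a (f a) c * Real.log (p f c / q c)) := by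
          have e : ∀ f, M f * ∑ c, p f c * Real.log (p f c / q c) =
              ∑ c, ∑ a, M f * (μ a * V a (f a) c * Real.log (p f c / q c)) := by
            intro f
            rw [Finset.mul_sum]
            refine Finset.sum_congr rfl fun c _ => ?_
            rw [← Finset.mul_sum, ← Finset.sum_mul]
          rw [Finset.sum_congr rfl fun f _ => e f, Finset.sum_comm,
            Finset.sum_comm (s := (univ : Finset A))]
          refine Finset.sum_congr rfl fun c _ => ?_
          rw [Finset.sum_comm]
      _ ≤ ∑ a, ∑ c, ∑ f, M f * (μ a * V a (f a) c * Real.log (1 + μ a * V a (f a) c / q c)) := by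
          refine Finset.sum_le_sum fun a _ => Finset.sum_le_sum fun c _ => ?_
          refine (Finset.sum_le_sum fun f _ => hpt f a c).trans ?_
          rw [Finset.sum_add_distrib]
          linarith [hneg a c]
      _ = R := by
          rw [hR]
          refine Finset.sum_congr rfl fun a _ => ?_
          rw [Finset.sum_comm (s := (univ : Finset B))]
          refine Finset.sum_congr rfl fun c _ => ?_
          rw [sc_E1 κ hκ a (fun b => μ a * V a b c * Real.log (1 + μ a * V a b c / q c))]
          exact Finset.sum_congr rfl fun b _ => by ring
  by_contra hcon
  push Not at hcon
  have hlt : ∀ f, M f * R ≤ M f * ∑ c, p f c * Real.log (p f c / q c) := by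
    intro f
    rcases (hM0 f).eq_or_lt with h0 | hMp
    · simp [← h0]
    · refine (mul_lt_mul_of_pos_left (hcon f fun a => ?_) hMp).le
      refine lt_of_le_of_ne (hκ0 _ _) fun h0 => ?_
      have : M f = 0 := Finset.prod_eq_zero (mem_univ a) h0.symm
      linarith
  obtain ⟨f, hf⟩ : ∃ f, 0 < M f := by
    by_contra hc
    push Not at hc
    have := Finset.sum_nonpos fun f (_ : f ∈ univ) => hc f
    linarith
  have hlt' : M f * R < M f * ∑ c, p f c * Real.log (p f c / q c) := by
    refine mul_lt_mul_of_pos_left (hcon f fun a => ?_) hf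
    refine lt_of_le_of_ne (hκ0 _ _) fun h0 => ?_
    have : M f = 0 := Finset.prod_eq_zero (mem_univ a) h0.symm
    linarith
  have := Finset.sum_lt_sum (fun f (_ : f ∈ univ) => hlt f) ⟨f, mem_univ _, hlt'⟩
  rw [← Finset.sum_mul, hM1] at this
  linarith

/-- Gibbs inequality. -/
theorem sc_gibbs {C : Type*} [Fintype C] (p q : C → ℝ) (hp : ∀ c, 0 ≤ p c) (hq : ∀ c, 0 ≤ q c)
    (hac : ∀ c, q c = 0 → p c = 0) (hpq : ∑ c, q c ≤ ∑ c, p c) :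
    0 ≤ ∑ c, p c * Real.log (p c / q c) := by
  have : ∀ c, p c - q c ≤ p c * Real.log (p c / q c) := by
    intro c
    rcases (hp c).eq_or_lt with h0 | hpp
    · simp [← h0, hq c]
    · have hqp : 0 < q c := lt_of_le_of_ne (hq c) fun h => hpp.ne' (hac c h.symm)
      have := Real.log_le_sub_one_of_pos (div_pos hqp hpp)
      have e : Real.log (p c / q c) = - Real.log (q c / p c) := by
        rw [← Real.log_inv, inv_div]
      rw [e]
      have h2 := mul_le_mul_of_nonneg_left this hpp.le
      have e3 : p c * (q c / p c - 1) = q c - p c := by field_simp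
      linarith
  have := Finset.sum_le_sum fun c (_ : c ∈ univ) => this c
  rw [Finset.sum_sub_distrib] at this
  linarith

/-- moment bound -/
theorem sc_moment {T : Type*} [Fintype T] (P Z : T → ℝ) (hP1 : ∑ t, P t = 1)
    (hZ : ∀ t, P t ≠ 0 → 0 < Z t) (hneg : ∑ t, P t * Real.log (Z t) < 0) :
    ∃ s : ℝ, 0 < s ∧ s ≤ 1 ∧ ∑ t, P t * Z t ^ s < 1 := by
  have hd : HasDerivAt (fun s : ℝ => ∑ t, P t * Z t ^ s) (∑ t, P t * Real.log (Z t)) 0 := by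
    apply HasDerivAt.fun_sum
    intro t _
    by_cases h : P t = 0
    · simpa [h] using hasDerivAt_const (0:ℝ) (0:ℝ)
    · have := ((hasDerivAt_id (0:ℝ)).const_rpow (hZ t h)).const_mul (P t)
      simpa using this
  rw [hasDerivAt_iff_tendsto_slope] at hd
  have h1 := (hd.mono_left (nhdsWithin_mono (0:ℝ) (fun x (hx : x ∈ Set.Ioi (0:ℝ)) => ne_of_gt hx))).eventually_lt_const hneg
  have h2 : ∀ᶠ s : ℝ in nhdsWithin 0 (Set.Ioi 0), s ∈ Set.Ioc (0:ℝ) 1 :=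
    Ioc_mem_nhdsGT (by norm_num)
  obtain ⟨s, hs, hs0, hs1⟩ := (h1.and h2).exists
  refine ⟨s, hs0, hs1, ?_⟩
  rw [slope_def_field, div_lt_iff₀ (by linarith)] at hs
  simp [hP1] at hs
  linarith

end helpers

/-- soft-covering lemma, Lemma VII.9 of Cuff: if `H(U) > I(X;U,W)`, there is
a sequence of encodings `a_n : U^n → W^n` such that the output distribution
`p_{X^n}(x^n) = Σ_{u^n} p_U^{⊗n}(u^n) ∏_i p_{X|UW}(x_i | u_i, a_n(u^n)_i)` converges to
`p_X^{⊗n}` in KL divergence. -/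
theorem stmt14
    {X U W : Type} [Fintype X] [Fintype U] [Fintype W]
    (P : X × U × W → ℝ) (hP : IsPMF P)
    (pU : U → ℝ) (hpU : ∀ u, pU u = ∑ x, ∑ w, P (x, u, w))
    (pX : X → ℝ) (hpX : ∀ x, pX x = ∑ u, ∑ w, P (x, u, w))
    (pXgUW : U → W → X → ℝ) (hXgUW : ∀ u w, IsPMF (pXgUW u w))
    (hdecomp : ∀ x u w, P (x, u, w) = (∑ x', P (x', u, w)) * pXgUW u w x)
    -- `I(X;U,W) = H(X) + H(U,W) - H(X,U,W) < H(U)`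
    (hHI : ent pX + ent (fun uw : U × W => ∑ x, P (x, uw.1, uw.2)) - ent P < ent pU) :
    ∃ a : (n : ℕ) → (Fin n → U) → (Fin n → W),
      Filter.Tendsto
        (fun n => klDiv
          (fun xn : Fin n → X =>
            ∑ un : Fin n → U, (∏ i, pU (un i)) * ∏ i, pXgUW (un i) (a n un i) (xn i))
          (fun xn => ∏ i, pX (xn i)))
        Filter.atTop (nhds 0) := by
  classical
  obtain ⟨hP0, hP1⟩ := hP
  have hP1' : ∑ x, ∑ u, ∑ w, P (x, u, w) = 1 := by
    rw [← hP1, Fintype.sum_prod_type]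
    simp_rw [Fintype.sum_prod_type]
  have hW : Nonempty W := by
    by_contra hW
    rw [not_nonempty_iff] at hW
    simp at hP1'
  have hcard : (0 : ℝ) < Fintype.card W := by exact_mod_cast Fintype.card_pos
  set Q : U → W → ℝ := fun u w => ∑ x, P (x, u, w) with hQ
  have hQ0 : ∀ u w, 0 ≤ Q u w := fun u w => Finset.sum_nonneg fun x _ => hP0 _
  have hpU' : ∀ u, pU u = ∑ w, Q u w := fun u => by rw [hpU, Finset.sum_comm]
  have hpU0 : ∀ u, 0 ≤ pU u := fun u => by
    rw [hpU']; exact Finset.sum_nonneg fun w _ => hQ0 u w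
  have hpX0 : ∀ x, 0 ≤ pX x := fun x => by
    rw [hpX]; exact Finset.sum_nonneg fun u _ => Finset.sum_nonneg fun w _ => hP0 _
  have hQpU : ∀ u w, Q u w ≤ pU u := fun u w => by
    rw [hpU']; exact Finset.single_le_sum (fun w _ => hQ0 u w) (mem_univ w)
  have hPQ : ∀ x u w, P (x, u, w) ≤ Q u w := fun x u w =>
    Finset.single_le_sum (f := fun x => P (x, u, w)) (fun x _ => hP0 _) (mem_univ x)
  have hPX : ∀ x u w, P (x, u, w) ≤ pX x := fun x u w => by
    rw [hpX]
    exact (Finset.single_le_sum (f := fun w => P (x, u, w)) (fun w _ => hP0 _)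
      (mem_univ w)).trans (Finset.single_le_sum (f := fun u => ∑ w, P (x, u, w))
        (fun u _ => Finset.sum_nonneg fun w _ => hP0 _) (mem_univ u))
  have hV0 : ∀ u w x, 0 ≤ pXgUW u w x := fun u w x => (hXgUW u w).1 x
  set k : U → W → ℝ := fun u w => if pU u = 0 then (Fintype.card W : ℝ)⁻¹ else Q u w / pU u with hk
  have hk0 : ∀ u w, 0 ≤ k u w := by
    intro u w
    simp only [hk]
    split_ifs
    · positivity
    · exact div_nonneg (hQ0 _ _) (hpU0 _)
  have hk1 : ∀ u, ∑ w, k u w = 1 := by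
    intro u
    by_cases h : pU u = 0
    · simp [hk, h, hcard.ne']
    · simp only [hk, h, if_false]
      rw [← Finset.sum_div, ← hpU', div_self h]
  have hkQ : ∀ u w, pU u * k u w = Q u w := by
    intro u w
    by_cases h : pU u = 0
    · have := hQpU u w
      have := hQ0 u w
      simp only [h, zero_mul]
      linarith
    · simp only [hk, h, if_false]
      field_simp
  have hkP : ∀ u w x, pU u * k u w * pXgUW u w x = P (x, u, w) := fun u w x => by
    rw [hkQ, hdecomp]
  have hpX1 : ∑ x, pX x = 1 := by simp_rw [hpX]; exact hP1'
  have hpU1 : ∑ u, pU u = 1 := by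
    simp_rw [hpU]
    rw [Finset.sum_comm]; exact hP1'
  set Z : X × U × W → ℝ := fun t => pU t.2.1 * pXgUW t.2.1 t.2.2 t.1 / pX t.1 with hZ
  have hZ0 : ∀ t, 0 ≤ Z t := fun t =>
    div_nonneg (mul_nonneg (hpU0 _) (hV0 _ _ _)) (hpX0 _)
  have hpos : ∀ x u w, P (x, u, w) ≠ 0 →
      0 < P (x, u, w) ∧ 0 < Q u w ∧ 0 < pU u ∧ 0 < pX x ∧ 0 < pXgUW u w x := by
    intro x u w h
    have h1 : 0 < P (x, u, w) := lt_of_le_of_ne (hP0 _) h.symm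
    have h2 := h1.trans_le (hPQ x u w)
    refine ⟨h1, h2, h2.trans_le (hQpU u w), h1.trans_le (hPX x u w), ?_⟩
    refine lt_of_le_of_ne (hV0 _ _ _) fun h0 => h ?_
    rw [hdecomp, ← h0, mul_zero]
  obtain ⟨s, hs0, hs1, hs⟩ := sc_moment P Z hP1
    (by
      rintro ⟨x, u, w⟩ h
      obtain ⟨h1, h2, h3, h4, h5⟩ := hpos x u w h
      exact div_pos (mul_pos h3 h5) h4)
    (by
      have hlog2 : 0 < Real.log 2 := Real.log_pos (by norm_num)
      have e : ∀ t : X × U × W, P t * Real.log (Z t) =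
          P t * Real.log (pU t.2.1) + P t * Real.log (P t) - P t * Real.log (Q t.2.1 t.2.2)
            - P t * Real.log (pX t.1) := by
        rintro ⟨x, u, w⟩
        by_cases h : P (x, u, w) = 0
        · simp [h]
        obtain ⟨h1, h2, h3, h4, h5⟩ := hpos x u w h
        simp only [hZ]
        have e2 : Real.log (P (x, u, w)) = Real.log (Q u w) + Real.log (pXgUW u w x) := by
          rw [← Real.log_mul h2.ne' h5.ne', hdecomp]
        rw [Real.log_div (mul_pos h3 h5).ne' h4.ne', Real.log_mul h3.ne' h5.ne', e2]
        ring
      rw [Finset.sum_congr rfl fun t _ => e t]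
      simp only [Finset.sum_sub_distrib, Finset.sum_add_distrib]
      have eU : ∑ t : X × U × W, P t * Real.log (pU t.2.1) = ∑ u, pU u * Real.log (pU u) := by
        simp_rw [Fintype.sum_prod_type]
        rw [Finset.sum_comm]
        refine Finset.sum_congr rfl fun u _ => ?_
        simp_rw [← Finset.sum_mul]
        rw [← hpU]
      have eX : ∑ t : X × U × W, P t * Real.log (pX t.1) = ∑ x, pX x * Real.log (pX x) := by
        simp_rw [Fintype.sum_prod_type]
        refine Finset.sum_congr rfl fun x _ => ?_
        simp_rw [← Finset.sum_mul]
        rw [← hpX]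
      have eQ : ∑ t : X × U × W, P t * Real.log (Q t.2.1 t.2.2) =
          ∑ t : U × W, Q t.1 t.2 * Real.log (Q t.1 t.2) := by
        rw [Fintype.sum_prod_type, Finset.sum_comm]
        refine Finset.sum_congr rfl fun t _ => ?_
        simp only [← Finset.sum_mul]
        rfl
      rw [eU, eX, eQ]
      have hent : ∀ {α : Type} [Fintype α] (p : α → ℝ),
          ent p = -(∑ a, p a * Real.log (p a)) / Real.log 2 := by
        intro α _ p
        simp only [ent, Real.logb]
        rw [neg_div, Finset.sum_div]
        simp only [mul_div_assoc]
      rw [hent, hent, hent, hent, ← add_div, ← sub_div, div_lt_div_iff_of_pos_right hlog2] at hHI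
      linarith)
  set ρ := ∑ t, P t * Z t ^ s with hρ
  have hρ0 : 0 ≤ ρ := Finset.sum_nonneg fun t _ =>
    mul_nonneg (hP0 t) (Real.rpow_nonneg (hZ0 t) s)
  have hcode : ∀ n : ℕ, ∃ f : (Fin n → U) → (Fin n → W),
      0 ≤ klDiv
          (fun xn : Fin n → X =>
            ∑ un : Fin n → U, (∏ i, pU (un i)) * ∏ i, pXgUW (un i) (f un i) (xn i))
          (fun xn => ∏ i, pX (xn i)) ∧
      klDiv
          (fun xn : Fin n → X =>
            ∑ un : Fin n → U, (∏ i, pU (un i)) * ∏ i, pXgUW (un i) (f un i) (xn i))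
          (fun xn => ∏ i, pX (xn i)) ≤ ρ ^ n / s / Real.log 2 := by
    intro n
    have hlog2 : 0 < Real.log 2 := Real.log_pos (by norm_num)
    have hqn : ∀ xn : Fin n → X, ∏ i, pX (xn i) = ∑ un : Fin n → U, ∑ wn : Fin n → W,
        (∏ i, pU (un i)) * (∏ i, k (un i) (wn i)) * ∏ i, pXgUW (un i) (wn i) (xn i) := by
      intro xn
      simp_rw [← Finset.prod_mul_distrib, hkP]
      have e1 : ∀ un : Fin n → U, ∑ wn : Fin n → W, ∏ i, P (xn i, un i, wn i) =
          ∏ i, ∑ w, P (xn i, un i, w) := fun un => sc_sum_pi (fun i w => P (xn i, un i, w))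
      simp_rw [e1]
      rw [sc_sum_pi (fun i u => ∑ w, P (xn i, u, w))]
      simp_rw [hpX]
    obtain ⟨f, hf, hle⟩ := sc_oneshot (A := Fin n → U) (B := Fin n → W) (C := Fin n → X)
      (fun un => ∏ i, pU (un i)) (fun un => Finset.prod_nonneg fun i _ => hpU0 _)
      (fun un wn => ∏ i, k (un i) (wn i)) (fun un wn => Finset.prod_nonneg fun i _ => hk0 _ _)
      (fun un => by
        rw [sc_sum_pi (fun i w => k (un i) w)]
        simp [hk1])
      (fun un wn xn => ∏ i, pXgUW (un i) (wn i) (xn i))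
      (fun un wn xn => Finset.prod_nonneg fun i _ => hV0 _ _ _)
      (fun xn => ∏ i, pX (xn i)) hqn
    have hkl : klDiv
          (fun xn : Fin n → X =>
            ∑ un : Fin n → U, (∏ i, pU (un i)) * ∏ i, pXgUW (un i) (f un i) (xn i))
          (fun xn => ∏ i, pX (xn i)) = (∑ xn : Fin n → X,
            (∑ un : Fin n → U, (∏ i, pU (un i)) * ∏ i, pXgUW (un i) (f un i) (xn i)) *
            Real.log ((∑ un : Fin n → U, (∏ i, pU (un i)) * ∏ i, pXgUW (un i) (f un i) (xn i))
              / ∏ i, pX (xn i))) / Real.log 2 := by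
      simp only [klDiv, Real.logb]
      rw [Finset.sum_div]
      simp only [mul_div_assoc]
    refine ⟨f, ?_, ?_⟩
    · rw [hkl]
      refine div_nonneg (sc_gibbs _ _ ?_ ?_ ?_ ?_) hlog2.le
      · exact fun xn => Finset.sum_nonneg fun un _ => mul_nonneg
          (Finset.prod_nonneg fun i _ => hpU0 _) (Finset.prod_nonneg fun i _ => hV0 _ _ _)
      · exact fun xn => Finset.prod_nonneg fun i _ => hpX0 _
      · intro xn h0
        rw [hqn] at h0
        have hnn : ∀ (un : Fin n → U) (wn : Fin n → W), 0 ≤ (∏ i, pU (un i)) *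
            (∏ i, k (un i) (wn i)) * ∏ i, pXgUW (un i) (wn i) (xn i) := fun un wn =>
          mul_nonneg (mul_nonneg (Finset.prod_nonneg fun i _ => hpU0 _)
            (Finset.prod_nonneg fun i _ => hk0 _ _)) (Finset.prod_nonneg fun i _ => hV0 _ _ _)
        refine Finset.sum_eq_zero fun un _ => ?_
        have h1 := (Finset.sum_eq_zero_iff_of_nonneg
          (fun un _ => Finset.sum_nonneg fun wn _ => hnn un wn)).1 h0 un (mem_univ _)
        have h2 := (Finset.sum_eq_zero_iff_of_nonneg (fun wn _ => hnn un wn)).1 h1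
          (f un) (mem_univ _)
        have h3 := (hf un).ne'
        rw [mul_right_comm] at h2
        exact (mul_eq_zero.1 h2).resolve_right h3
      · rw [Finset.sum_comm]
        refine le_of_eq ?_
        rw [sc_sum_pi (fun (_ : Fin n) x => pX x)]
        simp_rw [← Finset.mul_sum]
        have e1 : ∀ un : Fin n → U, ∑ xn : Fin n → X, ∏ i, pXgUW (un i) (f un i) (xn i) = 1 := by
          intro un
          rw [sc_sum_pi (fun i x => pXgUW (un i) (f un i) x)]
          exact Finset.prod_eq_one fun i _ => (hXgUW _ _).2
        simp_rw [e1, mul_one]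
        rw [sc_sum_pi (fun (_ : Fin n) u => pU u), hpU1, hpX1]
    · rw [hkl]
      refine div_le_div_of_nonneg_right (hle.trans ?_) hlog2.le
      have hterm : ∀ (un : Fin n → U) (wn : Fin n → W) (xn : Fin n → X),
          (∏ i, pU (un i)) * (∏ i, k (un i) (wn i)) * (∏ i, pXgUW (un i) (wn i) (xn i)) *
            Real.log (1 + (∏ i, pU (un i)) * (∏ i, pXgUW (un i) (wn i) (xn i)) /
              ∏ i, pX (xn i)) ≤
          (∏ i, P (xn i, un i, wn i) * Z (xn i, un i, wn i) ^ s) / s := by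
        intro un wn xn
        have ez : (∏ i, pU (un i)) * (∏ i, pXgUW (un i) (wn i) (xn i)) / ∏ i, pX (xn i) =
            ∏ i, Z (xn i, un i, wn i) := by
          simp only [hZ]
          rw [← Finset.prod_mul_distrib, ← Finset.prod_div_distrib]
        have ep : (∏ i, pU (un i)) * (∏ i, k (un i) (wn i)) *
            (∏ i, pXgUW (un i) (wn i) (xn i)) = ∏ i, P (xn i, un i, wn i) := by
          simp_rw [← Finset.prod_mul_distrib, hkP]
        rw [ez, ep, Finset.prod_mul_distrib, mul_div_assoc]
        refine mul_le_mul_of_nonneg_left ?_ (Finset.prod_nonneg fun i _ => hP0 _)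
        rw [Real.finsetProd_rpow _ _ (fun i _ => hZ0 _)]
        exact sc_log_bound _ _ (Finset.prod_nonneg fun i _ => hZ0 _) hs0 hs1
      refine (Finset.sum_le_sum fun un _ => Finset.sum_le_sum fun wn _ =>
        Finset.sum_le_sum fun xn _ => hterm un wn xn).trans (le_of_eq ?_)
      simp_rw [← Finset.sum_div]
      congr 1
      have e1 : ∀ (un : Fin n → U) (wn : Fin n → W), ∑ xn : Fin n → X,
          ∏ i, P (xn i, un i, wn i) * Z (xn i, un i, wn i) ^ s =
          ∏ i, ∑ x, P (x, un i, wn i) * Z (x, un i, wn i) ^ s := fun un wn =>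
        sc_sum_pi (fun i x => P (x, un i, wn i) * Z (x, un i, wn i) ^ s)
      have e2 : ∀ (un : Fin n → U), ∑ wn : Fin n → W,
          ∏ i, ∑ x, P (x, un i, wn i) * Z (x, un i, wn i) ^ s =
          ∏ i, ∑ w, ∑ x, P (x, un i, w) * Z (x, un i, w) ^ s := fun un =>
        sc_sum_pi (fun i w => ∑ x, P (x, un i, w) * Z (x, un i, w) ^ s)
      simp_rw [e1, e2]
      rw [sc_sum_pi (fun (_ : Fin n) u => ∑ w, ∑ x, P (x, u, w) * Z (x, u, w) ^ s)]
      rw [Finset.prod_const, Finset.card_univ, Fintype.card_fin]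
      congr 1
      rw [hρ, Fintype.sum_prod_type_right, Fintype.sum_prod_type]
  choose a ha0 ha1 using hcode
  refine ⟨a, ?_⟩
  refine squeeze_zero ha0 ha1 ?_
  have := ((tendsto_pow_atTop_nhds_zero_of_lt_one hρ0 hs).div_const s).div_const (Real.log 2)
  simpa using this
end

section
/- Fix 0 < p < 1/2. There exist constants C₁, C₂ > 0 depending only on p such that the following holds for all n and all ε > 0. Let (U^n, V^n) ~ DSBS(p)^⊗n on {−1,1}^n × {−1,1}^n, let A and B be finite-valued random variables with A, B, (U^n,V^n) mutually independent, let X_i = f_i(U^n, A) and Y_i = g_i(V^n, B) for deterministic functions f_i, g_i with values in {−1,1}, and suppose D( p_{X^nY^n} ‖ p_{XY}^{⊗n} ) ≤ ε where p_{XY} is DSBS(p). Then Pr[ (1/n) Σ_{i=1}^n Pr( X_i ≠ Y_i | A, B ) ≤ p + C₁·ε^{1/4}·n^{−3/4}/(1−2p) ] ≥ 1 − C₂·(nε)^{1/4}, where the outer probability is over (A,B). -/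
open Finset

/-- The pmf of one DSBS(p) pair (values in the cube, encoded by `Bool`). -/
noncomputable def dsbsPair (p : ℝ) (uv : Bool × Bool) : ℝ :=
  if uv.1 = uv.2 then (1 - p) / 2 else p / 2

/-- Weight of a pair of strings. -/
noncomputable def ww (p : ℝ) {n : ℕ} (u v : Fin n → Bool) : ℝ := ∏ i, dsbsPair p (u i, v i)

/-- Sign encoding. -/
noncomputable def sg (b : Bool) : ℝ := if b then 1 else -1

/-- Uniform mean. -/
noncomputable def mean {n : ℕ} (f : (Fin n → Bool) → ℝ) : ℝ := (1/2)^n * ∑ u, f u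

lemma sum_cons {n : ℕ} (F : (Fin (n+1) → Bool) → ℝ) :
    ∑ u, F u = ∑ u, F (Fin.cons true u) + ∑ u, F (Fin.cons false u) := by
  rw [← (Fin.consEquiv (fun _ : Fin (n+1) => Bool)).sum_comp, Fintype.sum_prod_type,
    Fintype.sum_bool]
  rfl

lemma mean_succ {n : ℕ} (f : (Fin (n+1) → Bool) → ℝ) :
    mean f = (mean (fun u => f (Fin.cons true u)) + mean (fun u => f (Fin.cons false u))) / 2 := by
  simp only [mean, sum_cons, pow_succ]; ring

lemma ww_cons (p : ℝ) {n : ℕ} (x y : Bool) (u v : Fin n → Bool) :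
    ww p (Fin.cons x u : Fin (n+1) → Bool) (Fin.cons y v) = dsbsPair p (x, y) * ww p u v := by
  simp [ww, Fin.prod_univ_succ]

lemma ww_nonneg (p : ℝ) (hp0 : 0 < p) (hp : p < 1/2) {n : ℕ} (u v : Fin n → Bool) :
    0 ≤ ww p u v := by
  apply Finset.prod_nonneg
  intro i _
  unfold dsbsPair
  split_ifs <;> linarith

lemma cov_bound (p : ℝ) (hp0 : 0 < p) (hp : p < 1/2) : ∀ (n : ℕ) (f g : (Fin n → Bool) → ℝ),
    ∑ u, ∑ v, ww p u v * (f u * g v) ≤ mean f * mean g + ((1 - 2*p)/2) *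
      (mean (fun u => f u ^ 2) - mean f ^ 2 + (mean (fun u => g u ^ 2) - mean g ^ 2)) := by
  intro n
  induction n with
  | zero => intro f g; simp [mean, ww]
  | succ n ih =>
    intro f g
    rw [mean_succ f, mean_succ g, mean_succ (fun u => f u ^ 2), mean_succ (fun u => g u ^ 2)]
    have key : ∑ u, ∑ v, ww p u v * (f u * g v) =
        (1-p)/2 * ∑ u, ∑ v, ww p u v * (f (Fin.cons true u) * g (Fin.cons true v))
        + p/2 * ∑ u, ∑ v, ww p u v * (f (Fin.cons true u) * g (Fin.cons false v))
        + p/2 * ∑ u, ∑ v, ww p u v * (f (Fin.cons false u) * g (Fin.cons true v))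
        + (1-p)/2 * ∑ u, ∑ v, ww p u v * (f (Fin.cons false u) * g (Fin.cons false v)) := by
      simp only [sum_cons, ww_cons, dsbsPair, Finset.mul_sum, ← Finset.sum_add_distrib]
      refine Finset.sum_congr rfl fun u _ => Finset.sum_congr rfl fun v _ => ?_
      simp
      ring
    have c1 : 0 ≤ (1-p)/2 := by linarith
    have c2 : 0 ≤ p/2 := by linarith
    have h1 := mul_le_mul_of_nonneg_left
      (ih (fun u => f (Fin.cons true u)) (fun u => g (Fin.cons true u))) c1
    have h2 := mul_le_mul_of_nonneg_left
      (ih (fun u => f (Fin.cons true u)) (fun u => g (Fin.cons false u))) c2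
    have h3 := mul_le_mul_of_nonneg_left
      (ih (fun u => f (Fin.cons false u)) (fun u => g (Fin.cons true u))) c2
    have h4 := mul_le_mul_of_nonneg_left
      (ih (fun u => f (Fin.cons false u)) (fun u => g (Fin.cons false u))) c1
    rw [key]
    set m1 := mean (fun u => f (Fin.cons true u))
    set m0 := mean (fun u => f (Fin.cons false u))
    set k1 := mean (fun u => g (Fin.cons true u))
    set k0 := mean (fun u => g (Fin.cons false u))
    have c3 : 0 ≤ 1 - 2*p := by linarith
    have h5 := mul_nonneg c3 (sq_nonneg (m1 - m0 - (k1 - k0)))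
    linarith

lemma sum_pair_prod {n : ℕ} (F : Fin n → Bool × Bool → ℝ) :
    ∑ xy : (Fin n → Bool) × (Fin n → Bool), ∏ i, F i (xy.1 i, xy.2 i)
      = ∏ i, ∑ z, F i z := by
  rw [Finset.prod_univ_sum, Fintype.piFinset_univ,
    ← (Equiv.arrowProdEquivProdArrow (Fin n) (fun _ => Bool) (fun _ => Bool)).sum_comp]
  rfl

lemma ww_marg_right (p : ℝ) {n : ℕ} (u : Fin n → Bool) : ∑ v, ww p u v = (1/2)^n := by
  have h := Finset.prod_univ_sum (fun _ : Fin n => (Finset.univ : Finset Bool))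
    (fun i y => dsbsPair p (u i, y))
  rw [Fintype.piFinset_univ] at h
  unfold ww
  rw [← h]
  have : ∀ i, ∑ y, dsbsPair p (u i, y) = 1/2 := by
    intro i; cases u i <;> simp [dsbsPair] <;> ring
  simp only [this]
  simp

lemma ww_comm (p : ℝ) {n : ℕ} (u v : Fin n → Bool) : ww p u v = ww p v u := by
  simp [ww, dsbsPair, eq_comm]

lemma ww_sum (p : ℝ) {n : ℕ} : ∑ u : Fin n → Bool, ∑ v, ww p u v = 1 := by
  simp [ww_marg_right]

lemma gibbs {α : Type*} [Fintype α] (P Q h : α → ℝ) (c : ℝ) (hP : ∀ a, 0 ≤ P a)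
    (hP1 : ∑ a, P a = 1) (hQ : ∀ a, 0 < Q a) (hc : ∑ a, Q a * Real.exp (h a) ≤ Real.exp c) :
    ∑ a, P a * h a ≤ Real.log 2 * klDiv P Q + c := by
  have hpt : ∀ a, P a * h a - Real.log 2 * (P a * Real.logb 2 (P a / Q a)) - c * P a
      ≤ Q a * Real.exp (h a) * Real.exp (-c) - P a := by
    intro a
    have hl : Real.log 2 * (P a * Real.logb 2 (P a / Q a)) = P a * Real.log (P a / Q a) := by
      unfold Real.logb
      have : Real.log 2 ≠ 0 := by positivity
      field_simp
    rw [hl]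
    rcases (hP a).eq_or_lt with h0 | h0
    · rw [← h0]; simp; have := hQ a; positivity
    · have h1 := Real.add_one_le_exp (h a - c - Real.log (P a / Q a))
      have h2 : P a * Real.exp (h a - c - Real.log (P a / Q a))
          = Q a * Real.exp (h a) * Real.exp (-c) := by
        rw [Real.exp_sub, Real.exp_log (div_pos h0 (hQ a)), sub_eq_add_neg, Real.exp_add]
        have := hQ a
        field_simp
      rw [← h2]
      nlinarith
  have hs := Finset.sum_le_sum fun a (_ : a ∈ Finset.univ) => hpt a
  simp only [Finset.sum_sub_distrib, ← Finset.mul_sum, ← Finset.sum_mul, hP1] at hs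
  have : (∑ a, Q a * Real.exp (h a)) * Real.exp (-c) ≤ 1 := by
    calc _ ≤ Real.exp c * Real.exp (-c) := by gcongr
      _ = 1 := by rw [← Real.exp_add]; simp
  unfold klDiv
  linarith

lemma dev_bound (p : ℝ) (hp0 : 0 < p) (hp : p < 1/2) {n : ℕ} (hn : 0 < n) (ε : ℝ) (hε : 0 < ε)
    (hnε : n * ε ≤ 1) (P : (Fin n → Bool) × (Fin n → Bool) → ℝ) (hP : ∀ a, 0 ≤ P a)
    (hP1 : ∑ a, P a = 1)
    (hkl : klDiv P (fun xy => ∏ i, dsbsPair p (xy.1 i, xy.2 i)) ≤ ε)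
    (φ : Fin n → Bool × Bool → ℝ) (hφ : ∀ i z, |φ i z| ≤ 2)
    (hm : ∀ i, ∑ z, dsbsPair p z * φ i z = 0) :
    ∑ xy, P xy * ∑ i, φ i (xy.1 i, xy.2 i) ≤ 4 * Real.sqrt (n * ε) := by
  have hd : ∀ z, 0 < dsbsPair p z := by
    intro z; unfold dsbsPair; split_ifs <;> linarith
  have hd1 : ∑ z, dsbsPair p z = 1 := by
    simp [dsbsPair, Fintype.sum_prod_type]; ring
  have hn' : (1:ℝ) ≤ n := by exact_mod_cast hn
  set s := Real.sqrt (n * ε) with hs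
  have hs0 : 0 < s := by positivity
  have hs2 : s ^ 2 = n * ε := Real.sq_sqrt (by positivity)
  have hs1 : s ≤ 1 := by rw [hs]; exact Real.sqrt_le_one.mpr hnε
  set l := s / (2 * n) with hl
  have hl0 : 0 < l := by positivity
  have hl1 : l ≤ 1/2 := by rw [hl, div_le_iff₀ (by positivity)]; linarith
  have hl2 : 4 * l^2 * n = ε := by rw [hl, div_pow, hs2]; field_simp; norm_num
  have hmgf : ∀ i, ∑ z, dsbsPair p z * Real.exp (l * φ i z) ≤ Real.exp (4 * l^2) := by
    intro i
    calc _ ≤ ∑ z, dsbsPair p z * (1 + l * φ i z + 4 * l^2) := by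
          apply Finset.sum_le_sum
          intro z _
          apply mul_le_mul_of_nonneg_left _ (hd z).le
          have ha : |l * φ i z| ≤ 1 := by
            rw [abs_mul, abs_of_pos hl0]
            have := hφ i z
            nlinarith [abs_nonneg (φ i z)]
          have h1 := (abs_le.mp (Real.abs_exp_sub_one_sub_id_le ha)).2
          have h2 : (φ i z)^2 ≤ 4 := by
            have := sq_le_sq' (by linarith [abs_nonneg (φ i z)]) (hφ i z)
            rw [sq_abs] at this; linarith
          nlinarith [mul_le_mul_of_nonneg_left h2 (sq_nonneg l)]
      _ = (∑ z, dsbsPair p z) + l * (∑ z, dsbsPair p z * φ i z)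
            + 4 * l^2 * ∑ z, dsbsPair p z := by
          simp only [Finset.mul_sum, ← Finset.sum_add_distrib]
          exact Finset.sum_congr rfl fun z _ => by ring
      _ = 4 * l^2 + 1 := by rw [hd1, hm]; ring
      _ ≤ _ := Real.add_one_le_exp _
  have hG := gibbs P (fun xy => ∏ i, dsbsPair p (xy.1 i, xy.2 i))
    (fun xy => l * ∑ i, φ i (xy.1 i, xy.2 i)) ε hP hP1
    (fun a => Finset.prod_pos fun i _ => hd _) (by
      have : ∀ xy : (Fin n → Bool) × (Fin n → Bool), (∏ i, dsbsPair p (xy.1 i, xy.2 i)) *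
          Real.exp (l * ∑ i, φ i (xy.1 i, xy.2 i)) =
          ∏ i, (fun i z => dsbsPair p z * Real.exp (l * φ i z)) i (xy.1 i, xy.2 i) := by
        intro xy
        rw [Finset.prod_mul_distrib, Finset.mul_sum, Real.exp_sum]
      simp only [this]
      rw [sum_pair_prod (fun i z => dsbsPair p z * Real.exp (l * φ i z))]
      calc _ ≤ ∏ i : Fin n, Real.exp (4 * l^2) := by
            apply Finset.prod_le_prod
            · intro i _; exact Finset.sum_nonneg fun z _ => by have := hd z; positivity
            · intro i _; exact hmgf i
        _ = Real.exp ε := by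
            rw [Finset.prod_const, Finset.card_univ, Fintype.card_fin, ← Real.exp_nat_mul]
            congr 1; linarith)
  have hlog : Real.log 2 ≤ 1 := by linarith [Real.log_two_lt_d9]
  have hlog0 : 0 < Real.log 2 := by positivity
  have h3 : Real.log 2 * klDiv P (fun xy => ∏ i, dsbsPair p (xy.1 i, xy.2 i)) ≤ ε := by
    nlinarith
  have h4 : ∑ xy, P xy * (l * ∑ i, φ i (xy.1 i, xy.2 i))
      = l * ∑ xy, P xy * ∑ i, φ i (xy.1 i, xy.2 i) := by
    rw [Finset.mul_sum]; exact Finset.sum_congr rfl fun z _ => by ring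
  rw [h4] at hG
  have h5 : l * ∑ xy, P xy * ∑ i, φ i (xy.1 i, xy.2 i) ≤ l * (4 * s) := by
    have : l * (4 * s) = 2 * ε := by
      rw [hl]; field_simp; rw [hs2]; ring
    linarith
  exact le_of_mul_le_mul_left h5 hl0

lemma sg_sq (b : Bool) : sg b ^ 2 = 1 := by cases b <;> simp [sg]

lemma mean_one {n : ℕ} : mean (fun _ : Fin n → Bool => (1:ℝ)) = 1 := by
  simp [mean]

lemma mean_abs_le {n : ℕ} (h : (Fin n → Bool) → Bool) : |mean (fun u => sg (h u))| ≤ 1 := by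
  unfold mean
  rw [abs_mul, abs_of_pos (by positivity)]
  calc _ ≤ (1/2 : ℝ)^n * ∑ u : Fin n → Bool, |sg (h u)| := by
        gcongr; exact Finset.abs_sum_le_sum_abs _ _
    _ = mean (fun _ : Fin n → Bool => (1:ℝ)) := by
        unfold mean
        congr 1
        exact Finset.sum_congr rfl fun u _ => by cases h u <;> simp [sg]
    _ = 1 := mean_one

lemma cov_sg (p : ℝ) (hp0 : 0 < p) (hp : p < 1/2) {n : ℕ} (f g : (Fin n → Bool) → Bool) :
    ∑ u, ∑ v, ww p u v * (sg (f u) * sg (g v)) ≤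
      mean (fun u => sg (f u)) * mean (fun u => sg (g u)) + ((1 - 2*p)/2) *
      (1 - mean (fun u => sg (f u)) ^ 2 + (1 - mean (fun u => sg (g u)) ^ 2)) := by
  have h := cov_bound p hp0 hp n (fun u => sg (f u)) (fun u => sg (g u))
  simpa only [sg_sq, mean_one] using h

lemma sum_ww_left (p : ℝ) {n : ℕ} (h : (Fin n → Bool) → ℝ) :
    ∑ u, ∑ v, ww p u v * h u = mean h := by
  simp only [← Finset.sum_mul, ww_marg_right, mean, Finset.mul_sum]

lemma transfer (p : ℝ) {n : ℕ} {A B : Type} [Fintype A] [Fintype B]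
    (pA : A → ℝ) (pB : B → ℝ)
    (F : (Fin n → Bool) → A → (Fin n → Bool)) (G : (Fin n → Bool) → B → (Fin n → Bool))
    (h : (Fin n → Bool) × (Fin n → Bool) → ℝ) :
    ∑ xy : (Fin n → Bool) × (Fin n → Bool),
      (∑ a, ∑ b, ∑ u : Fin n → Bool, ∑ v : Fin n → Bool,
            pA a * pB b * (∏ i, dsbsPair p (u i, v i)) *
              (if F u a = xy.1 then (1:ℝ) else 0) *
              (if G v b = xy.2 then (1:ℝ) else 0)) * h xy
    = ∑ a, ∑ b, pA a * pB b * ∑ u, ∑ v, ww p u v * h (F u a, G v b) := by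
  simp only [Finset.sum_mul, Finset.mul_sum]
  rw [Finset.sum_comm]
  refine Finset.sum_congr rfl fun a _ => ?_
  rw [Finset.sum_comm]
  refine Finset.sum_congr rfl fun b _ => ?_
  rw [Finset.sum_comm]
  refine Finset.sum_congr rfl fun u _ => ?_
  rw [Finset.sum_comm]
  refine Finset.sum_congr rfl fun v _ => ?_
  rw [Finset.sum_eq_single (F u a, G v b)]
  · simp [ww]; ring
  · rintro ⟨x, y⟩ _ hne
    by_cases h1 : F u a = x
    · by_cases h2 : G v b = y
      · exact absurd (by rw [h1, h2]) hne
      · simp [h2]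
    · simp [h1]
  · simp

lemma sum_AB {A B : Type} [Fintype A] [Fintype B]
    (pA : A → ℝ) (pB : B → ℝ) (x : A → ℝ) (y : B → ℝ) :
    ∑ a, ∑ b, pA a * pB b * (x a * y b) = (∑ a, pA a * x a) * (∑ b, pB b * y b) := by
  rw [Finset.sum_mul_sum]
  exact Finset.sum_congr rfl fun a _ => Finset.sum_congr rfl fun b _ => by ring

lemma core (p : ℝ) (hp0 : 0 < p) (hp : p < 1/2) {n : ℕ} (hn : 0 < n) (ε : ℝ) (hε : 0 < ε)
    (hnε : n * ε ≤ 1) (A B : Type) [Fintype A] [Fintype B]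
    (pA : A → ℝ) (pB : B → ℝ) (hA : IsPMF pA) (hB : IsPMF pB)
    (f : Fin n → (Fin n → Bool) → A → Bool) (g : Fin n → (Fin n → Bool) → B → Bool)
    (hkl : klDiv
        (fun xy : (Fin n → Bool) × (Fin n → Bool) =>
          ∑ a, ∑ b, ∑ u : Fin n → Bool, ∑ v : Fin n → Bool,
            pA a * pB b * (∏ i, dsbsPair p (u i, v i)) *
              (if (fun i => f i u a) = xy.1 then (1:ℝ) else 0) *
              (if (fun i => g i v b) = xy.2 then (1:ℝ) else 0))
        (fun xy => ∏ i, dsbsPair p (xy.1 i, xy.2 i)) ≤ ε) :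
    ∑ a, ∑ b, pA a * pB b * (∑ i, ((1 - 2*p) -
        (∑ u, ∑ v, ww p u v * (sg (f i u a) * sg (g i v b)))
        + (mean (fun u => sg (f i u a)) ^ 2 + mean (fun v => sg (g i v b)) ^ 2) / 2))
      ≤ 12 * Real.sqrt (n * ε) / (1 - 2*p) := by
  obtain ⟨hA0, hA1⟩ := hA
  obtain ⟨hB0, hB1⟩ := hB
  set P := (fun xy : (Fin n → Bool) × (Fin n → Bool) =>
          ∑ a, ∑ b, ∑ u : Fin n → Bool, ∑ v : Fin n → Bool,
            pA a * pB b * (∏ i, dsbsPair p (u i, v i)) *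
              (if (fun i => f i u a) = xy.1 then (1:ℝ) else 0) *
              (if (fun i => g i v b) = xy.2 then (1:ℝ) else 0)) with hPdef
  have htr : ∀ h : (Fin n → Bool) × (Fin n → Bool) → ℝ, ∑ xy, P xy * h xy =
      ∑ a, ∑ b, pA a * pB b * ∑ u, ∑ v, ww p u v * h (fun i => f i u a, fun i => g i v b) :=
    fun h => transfer p pA pB (fun u a i => f i u a) (fun v b i => g i v b) h
  have hP0 : ∀ xy, 0 ≤ P xy := by
    intro xy
    refine Finset.sum_nonneg fun a _ => Finset.sum_nonneg fun b _ => Finset.sum_nonneg fun u _ =>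
      Finset.sum_nonneg fun v _ => ?_
    have h1 := hA0 a
    have h2 := hB0 b
    have h3 : 0 ≤ ∏ i, dsbsPair p (u i, v i) := ww_nonneg p hp0 hp u v
    have h4 : (0:ℝ) ≤ if (fun i => f i u a) = xy.1 then (1:ℝ) else 0 := by split_ifs <;> simp
    have h5 : (0:ℝ) ≤ if (fun i => g i v b) = xy.2 then (1:ℝ) else 0 := by split_ifs <;> simp
    exact mul_nonneg (mul_nonneg (mul_nonneg (mul_nonneg h1 h2) h3) h4) h5
  have hP1 : ∑ xy, P xy = 1 := by
    have := htr (fun _ => 1)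
    simp only [mul_one, ww_sum] at this
    rw [this]
    simp only [← Finset.mul_sum, hB1, mul_one, hA1]
  set r := Real.sqrt (n * ε) with hr
  have hr0 : 0 ≤ r := Real.sqrt_nonneg _
  have hρ : 0 < 1 - 2*p := by linarith
  let cor : Fin n → A → B → ℝ := fun i a b =>
    ∑ u, ∑ v, ww p u v * (sg (f i u a) * sg (g i v b))
  let μ : Fin n → A → ℝ := fun i a => mean (fun u => sg (f i u a))
  let ν : Fin n → B → ℝ := fun i b => mean (fun v => sg (g i v b))
  have H3 : ∀ i a b, cor i a b ≤ μ i a * ν i b +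
      ((1 - 2*p)/2) * (1 - μ i a ^ 2 + (1 - ν i b ^ 2)) :=
    fun i a b => cov_sg p hp0 hp (fun u => f i u a) (fun v => g i v b)
  have H1 : ∑ a, ∑ b, pA a * pB b * ∑ i, ((1 - 2*p) - cor i a b) ≤ 4 * r := by
    have h := dev_bound p hp0 hp hn ε hε hnε P hP0 hP1 hkl
      (fun _ z => (1 - 2*p) - sg z.1 * sg z.2)
      (by rintro i ⟨x, y⟩; rw [abs_le]; cases x <;> cases y <;> simp [sg] <;> constructor <;>
            linarith)
      (by intro i; simp [Fintype.sum_prod_type, sg, dsbsPair]; ring)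
    rw [htr] at h
    refine le_trans (le_of_eq ?_) h
    refine Finset.sum_congr rfl fun a _ => Finset.sum_congr rfl fun b _ => ?_
    congr 1
    simp only [Finset.mul_sum]
    calc _ = ∑ i, ∑ u, ∑ v, ww p u v * ((1 - 2*p) - sg (f i u a) * sg (g i v b)) := by
          refine Finset.sum_congr rfl fun i _ => ?_
          simp only [mul_sub, Finset.sum_sub_distrib, ← Finset.sum_mul, ww_sum, cor]
          ring
      _ = _ := by
          rw [Finset.sum_comm]
          refine Finset.sum_congr rfl fun u _ => ?_
          rw [Finset.sum_comm]
  let m : Fin n → ℝ := fun i => ∑ a, pA a * μ i a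
  let k : Fin n → ℝ := fun i => ∑ b, pB b * ν i b
  have H2 : ∑ i, |m i| ≤ 4 * r := by
    let t : Fin n → ℝ := fun i => if 0 ≤ m i then 1 else -1
    have h := dev_bound p hp0 hp hn ε hε hnε P hP0 hP1 hkl
      (fun i z => t i * sg z.1)
      (by rintro i ⟨x, y⟩; cases x <;> simp [sg, t] <;> split_ifs <;> norm_num)
      (by intro i; simp [Fintype.sum_prod_type, sg, dsbsPair]; ring)
    rw [htr] at h
    refine le_trans (le_of_eq ?_) h
    have e : ∀ a, ∑ u, ∑ v, ww p u v * (∑ i, t i * sg (f i u a)) = ∑ i, t i * μ i a := by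
      intro a
      rw [sum_ww_left]
      simp only [mean, μ, Finset.mul_sum]
      rw [Finset.sum_comm]
      exact Finset.sum_congr rfl fun u _ => Finset.sum_congr rfl fun v _ => by ring
    symm
    calc _ = ∑ a, ∑ b, pA a * pB b * ((∑ i, t i * μ i a) * 1) := by
          refine Finset.sum_congr rfl fun a _ => Finset.sum_congr rfl fun b _ => ?_
          rw [mul_one]
          congr 1
          exact e a
      _ = ∑ a, pA a * ∑ i, t i * μ i a := by rw [sum_AB]; simp [hB1]
      _ = ∑ i, t i * m i := by
          simp only [m, Finset.mul_sum]
          rw [Finset.sum_comm]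
          exact Finset.sum_congr rfl fun u _ => Finset.sum_congr rfl fun v _ => by ring
      _ = _ := by
          refine Finset.sum_congr rfl fun i _ => ?_
          simp only [t]
          split_ifs with h0
          · rw [abs_of_nonneg h0]; ring
          · rw [abs_of_neg (not_le.mp h0)]; ring
  have hk : ∀ i, |k i| ≤ 1 := by
    intro i
    calc |k i| ≤ ∑ b, |pB b * ν i b| := Finset.abs_sum_le_sum_abs _ _
      _ ≤ ∑ b, pB b := by
          refine Finset.sum_le_sum fun b _ => ?_
          rw [abs_mul, abs_of_nonneg (hB0 b)]
          exact mul_le_of_le_one_right (hB0 b) (mean_abs_le _)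
      _ = 1 := hB1
  have hmk : ∑ i, m i * k i ≤ 4 * r := by
    refine le_trans (Finset.sum_le_sum fun i _ => ?_) H2
    calc m i * k i ≤ |m i * k i| := le_abs_self _
      _ = |m i| * |k i| := abs_mul _ _
      _ ≤ |m i| := mul_le_of_le_one_right (abs_nonneg _) (hk i)
  have emk : ∑ a, ∑ b, pA a * pB b * ∑ i, μ i a * ν i b = ∑ i, m i * k i := by
    simp only [m, k, ← sum_AB]
    simp only [Finset.mul_sum]
    symm
    rw [Finset.sum_comm]
    refine Finset.sum_congr rfl fun a _ => ?_
    rw [Finset.sum_comm]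
  set W := ∑ a, ∑ b, pA a * pB b * ∑ i, (μ i a ^ 2 + ν i b ^ 2) / 2 with hW
  have H4 : (1 - 2*p) * W ≤ 8 * r := by
    have h : (1 - 2*p) * W ≤ (∑ a, ∑ b, pA a * pB b * ∑ i, ((1 - 2*p) - cor i a b))
        + ∑ a, ∑ b, pA a * pB b * ∑ i, μ i a * ν i b := by
      simp only [hW, Finset.mul_sum (s := (Finset.univ : Finset A)),
        Finset.mul_sum (s := (Finset.univ : Finset B)), ← Finset.sum_add_distrib, ← mul_add]
      refine Finset.sum_le_sum fun a _ => Finset.sum_le_sum fun b _ => ?_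
      rw [mul_left_comm]
      refine mul_le_mul_of_nonneg_left ?_ (mul_nonneg (hA0 a) (hB0 b))
      rw [Finset.mul_sum]
      refine Finset.sum_le_sum fun i _ => ?_
      linarith [H3 i a b]
    linarith
  have hfin : ∑ a, ∑ b, pA a * pB b * (∑ i, ((1 - 2*p) - cor i a b
        + (μ i a ^ 2 + ν i b ^ 2) / 2)) =
      (∑ a, ∑ b, pA a * pB b * ∑ i, ((1 - 2*p) - cor i a b)) + W := by
    rw [hW]
    simp only [← Finset.sum_add_distrib, ← mul_add]
  change ∑ a, ∑ b, pA a * pB b * (∑ i, ((1 - 2*p) - cor i a b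
        + (μ i a ^ 2 + ν i b ^ 2) / 2)) ≤ _
  rw [hfin, le_div_iff₀ hρ]
  nlinarith

/-- Lemma 10 of the paper: for a randomized simulation
`X_i = f_i(U^n, A)`, `Y_i = g_i(V^n, B)` of `DSBS(p)` within KL divergence `ε`, with
probability at least `1 - C₂(nε)^{1/4}` over the local randomness `(A,B)`, the average
conditional disagreement probability is at most `p + C₁ ε^{1/4} n^{-3/4}/(1-2p)`. -/
theorem stmt15 (p : ℝ) (hp0 : 0 < p) (hp : p < 1 / 2) :
    ∃ C₁ > (0:ℝ), ∃ C₂ > (0:ℝ),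
      ∀ (n : ℕ) (ε : ℝ), 0 < ε →
      ∀ (A B : Type) [Fintype A] [Fintype B],
      ∀ (pA : A → ℝ) (pB : B → ℝ), IsPMF pA → IsPMF pB →
      ∀ (f : Fin n → (Fin n → Bool) → A → Bool)
        (g : Fin n → (Fin n → Bool) → B → Bool),
      klDiv
        (fun xy : (Fin n → Bool) × (Fin n → Bool) =>
          ∑ a, ∑ b, ∑ u : Fin n → Bool, ∑ v : Fin n → Bool,
            pA a * pB b * (∏ i, dsbsPair p (u i, v i)) *
              (if (fun i => f i u a) = xy.1 then (1:ℝ) else 0) *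
              (if (fun i => g i v b) = xy.2 then (1:ℝ) else 0))
        (fun xy => ∏ i, dsbsPair p (xy.1 i, xy.2 i)) ≤ ε →
      (∑ a, ∑ b, pA a * pB b *
          (if (1 / (n:ℝ)) * (∑ i : Fin n, ∑ u : Fin n → Bool, ∑ v : Fin n → Bool,
                (∏ j, dsbsPair p (u j, v j)) * (if f i u a ≠ g i v b then (1:ℝ) else 0))
              ≤ p + C₁ * ε ^ ((1:ℝ)/4) * (n:ℝ) ^ (-(3:ℝ)/4) / (1 - 2*p)
           then (1:ℝ) else 0))
        ≥ 1 - C₂ * ((n:ℝ) * ε) ^ ((1:ℝ)/4) := by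
  refine ⟨1, one_pos, 12, by norm_num, ?_⟩
  intro n ε hε A B _ _ pA pB hA hB f g hkl
  have hρ : 0 < 1 - 2*p := by linarith
  have hsum1 : ∑ a, ∑ b, pA a * pB b = 1 := by
    simp only [← Finset.mul_sum, hB.2, mul_one, hA.2]
  rcases Nat.eq_zero_or_pos n with rfl | hn
  · simp only [Finset.univ_eq_empty, Finset.sum_empty, mul_zero]
    have hc : (0:ℝ) ≤ p + 1 * ε ^ ((1:ℝ)/4) * ((0:ℕ):ℝ) ^ (-(3:ℝ)/4) / (1 - 2*p) := by
      positivity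
    simp only [if_pos hc, mul_one, hsum1]
    have : (0:ℝ) ≤ 12 * (((0:ℕ):ℝ) * ε) ^ ((1:ℝ)/4) := by positivity
    linarith
  have hn' : (0:ℝ) < n := by exact_mod_cast hn
  set q := ((n:ℝ) * ε) ^ ((1:ℝ)/4) with hq
  have hq0 : 0 < q := by positivity
  rcases le_or_gt ((n:ℝ) * ε) 1 with hnε | hnε
  swap
  · have h1 : 1 ≤ q := Real.one_le_rpow hnε.le (by norm_num)
    refine le_trans (by linarith : 1 - 12 * q ≤ 0) ?_
    refine Finset.sum_nonneg fun a _ => Finset.sum_nonneg fun b _ => ?_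
    refine mul_nonneg (mul_nonneg (hA.1 a) (hB.1 b)) ?_
    split_ifs <;> norm_num
  have hc := core p hp0 hp hn ε hε hnε A B pA pB hA hB f g hkl
  have hr : Real.sqrt (n * ε) = q * q := by
    rw [hq, ← Real.rpow_add (by positivity), Real.sqrt_eq_rpow]; norm_num
  have hqn : ε ^ ((1:ℝ)/4) * (n:ℝ) ^ (-(3:ℝ)/4) = q / n := by
    rw [hq, Real.mul_rpow hn'.le hε.le, eq_div_iff hn'.ne']
    have : (n:ℝ) ^ ((1:ℝ)/4) = (n:ℝ) ^ (-(3:ℝ)/4) * n := by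
      rw [← Real.rpow_add_one hn'.ne']; norm_num
    rw [this]; ring
  rw [hr] at hc
  have hmarkov : (q / (1 - 2*p)) * ((∑ a, ∑ b, pA a * pB b) - (∑ a, ∑ b, pA a * pB b *
          (if (1 / (n:ℝ)) * (∑ i : Fin n, ∑ u : Fin n → Bool, ∑ v : Fin n → Bool,
                (∏ j, dsbsPair p (u j, v j)) * (if f i u a ≠ g i v b then (1:ℝ) else 0))
              ≤ p + 1 * ε ^ ((1:ℝ)/4) * (n:ℝ) ^ (-(3:ℝ)/4) / (1 - 2*p)
           then (1:ℝ) else 0))) ≤ 12 * (q * q) / (1 - 2*p) := by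
    refine le_trans ?_ hc
    simp only [← Finset.sum_sub_distrib]
    simp only [Finset.mul_sum (s := (Finset.univ : Finset A)),
        Finset.mul_sum (s := (Finset.univ : Finset B))]
    refine Finset.sum_le_sum fun a _ => Finset.sum_le_sum fun b _ => ?_
    rw [← mul_one_sub, mul_left_comm]
    refine mul_le_mul_of_nonneg_left ?_ (mul_nonneg (hA.1 a) (hB.1 b))
    have H3 := fun i => cov_sg p hp0 hp (fun u => f i u a) (fun v => g i v b)
    split_ifs with hgood
    · rw [sub_self, mul_zero]
      refine Finset.sum_nonneg fun i _ => ?_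
      have := H3 i
      nlinarith [sq_nonneg (mean (fun u => sg (f i u a)) - mean (fun v => sg (g i v b))),
        mul_nonneg hρ.le (sq_nonneg (mean (fun u => sg (f i u a)))),
        mul_nonneg hρ.le (sq_nonneg (mean (fun v => sg (g i v b))))]
    · have hdis : ∑ i : Fin n, ∑ u : Fin n → Bool, ∑ v : Fin n → Bool,
          (∏ j, dsbsPair p (u j, v j)) * (if f i u a ≠ g i v b then (1:ℝ) else 0)
          = ∑ i : Fin n, (1 - ∑ u, ∑ v, ww p u v * (sg (f i u a) * sg (g i v b))) / 2 := by
        refine Finset.sum_congr rfl fun i _ => ?_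
        have hone : 1 - ∑ u, ∑ v, ww p u v * (sg (f i u a) * sg (g i v b)) =
            (∑ u : Fin n → Bool, ∑ v, ww p u v)
              - ∑ u, ∑ v, ww p u v * (sg (f i u a) * sg (g i v b)) := by rw [ww_sum]
        rw [hone, ← Finset.sum_sub_distrib, Finset.sum_div]
        refine Finset.sum_congr rfl fun u _ => ?_
        rw [← Finset.sum_sub_distrib, Finset.sum_div]
        refine Finset.sum_congr rfl fun v _ => ?_
        change ww p u v * _ = _
        cases f i u a <;> cases g i v b <;> simp [sg]
      rw [hdis, not_le, one_mul, hqn, one_div, ← div_eq_inv_mul, lt_div_iff₀ hn'] at hgood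
      have e1 : (p + q / n / (1 - 2*p)) * n = n * p + q / (1 - 2*p) := by
        field_simp
      rw [e1] at hgood
      have hq2 : 0 < q / (1 - 2*p) := by positivity
      have e2 : ∑ i : Fin n, ((1 - 2*p) - ∑ u, ∑ v, ww p u v * (sg (f i u a) * sg (g i v b)))
          = 2 * (∑ i : Fin n, (1 - ∑ u, ∑ v, ww p u v * (sg (f i u a) * sg (g i v b))) / 2)
            - 2 * (n * p) := by
        rw [Finset.mul_sum]
        have : (2 * (n * p) : ℝ) = ∑ i : Fin n, 2 * p := by simp; ring
        rw [this, ← Finset.sum_sub_distrib]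
        exact Finset.sum_congr rfl fun i _ => by ring
      have e3 : ∑ i : Fin n, ((1 - 2*p) - ∑ u, ∑ v, ww p u v * (sg (f i u a) * sg (g i v b)))
          ≤ ∑ i : Fin n, ((1 - 2*p) - (∑ u, ∑ v, ww p u v * (sg (f i u a) * sg (g i v b)))
        + (mean (fun u => sg (f i u a)) ^ 2 + mean (fun v => sg (g i v b)) ^ 2) / 2) := by
        refine Finset.sum_le_sum fun i _ => ?_
        have := sq_nonneg (mean (fun u => sg (f i u a)))
        have := sq_nonneg (mean (fun v => sg (g i v b)))
        linarith
      linarith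
  have e : 12 * (q * q) / (1 - 2*p) = (q / (1 - 2*p)) * (12 * q) := by ring
  rw [e, hsum1] at hmarkov
  have := le_of_mul_le_mul_left hmarkov (by positivity)
  linarith
end
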